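/- Let t be a finite (non-planar) rooted tree with |t| vertices, and let L₋(t) be the multiset of rooted trees obtained from t by deleting one leaf of t together with its outgoing edge (one element of L₋(t) for each leaf of t). Then |t|/t! = ∑_{t' ∈ L₋(t)} 1/t'!, where the tree factorial is defined recursively by t! = |t| · t₁! ⋯ t_k! when t is obtained by grafting the subtrees t₁, …, t_k onto a new root, with the convention that the empty tree has factorial 1. -/

import Mathlib

/-!
The identity is proved together with its analogue for forests. Put `|F| = ∑ |tᵢ|` and `F! = ∏ tᵢ!`
for a forest `F = t₁ ⋯ t_k`; then `|F|/F! = ∑ 1/F'!`, where `F'` runs over the forests obtained from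
`F` by deleting one leaf.

* Forests: deletion of a leaf acts as a derivation on the product of trees, and `|F|/F!` obeys the
  same Leibniz rule, `(|t| + |F|)/(t! F!) = (|t|/t!) (1/F!) + (1/t!) (|F|/F!)`
  (`forestSize_div_forestFact`).
* Trees: if `t` is obtained by grafting a nonempty forest `F` onto a root, the leaves of `t` are those
  of `F`, and every `t'` has `|t| - 1 = |F|` vertices (`forestSize_of_mem_delForest`). Hence
  `∑ 1/t'! = (1/|F|) ∑ 1/F'! = 1/F! = |t|/t!` (`size_div_fact_aux`).
-/

/-!
**Statement 4** (Lemma on rooted trees and tree factorials):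
for a rooted tree `t`, `|t|/t! = ∑_{t' ∈ L₋(t)} 1/t'!`, where `L₋(t)` is the multiset
of trees obtained from `t` by deleting one leaf (together with its outgoing edge).
-/

/-- Finite rooted trees: a tree is a root together with the list of subtrees grafted
onto it.  (All notions below are invariant under permuting the subtrees, so this also
faithfully represents non-planar rooted trees.) -/
inductive RTree : Type where
  | node : List RTree → RTree

namespace RTree

/-- The number `|t|` of vertices of `t`. -/
def size : RTree → ℕ
  | .node ts => 1 + (ts.attach.map fun x => size x.1).sum
decreasing_by
  have := List.sizeOf_lt_of_mem x.2
  simp only [RTree.node.sizeOf_spec]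
  omega

/-- The tree factorial, `t! = |t| ⬝ t₁! ⋯ t_k!` if `t` is obtained by grafting the
subtrees `t₁, …, t_k` onto a new root (so the one-vertex tree has factorial `1`). -/
def fact : RTree → ℕ
  | .node ts => (node ts).size * (ts.attach.map fun x => fact x.1).prod
decreasing_by
  have := List.sizeOf_lt_of_mem x.2
  simp only [RTree.node.sizeOf_spec]
  omega

mutual
/-- `L₋(t)`: the multiset (as a list, with multiplicities, one entry for each leaf of
`t`) of the results of deleting one leaf of `t` together with its outgoing edge;
`none` encodes the empty tree (which arises when deleting the unique vertex of the
one-vertex tree). -/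
def delOne : RTree → List (Option RTree)
  | .node [] => [Option.none]
  | .node (t :: ts) => (delForest (t :: ts)).map fun ts' => some (node ts')

/-- All results of deleting one leaf from a forest (a leaf which is a whole
one-vertex tree of the forest disappears). -/
def delForest : List RTree → List (List RTree)
  | [] => []
  | t :: ts =>
      ((delOne t).map fun o =>
        match o with
        | none => ts
        | some t' => t' :: ts)
      ++ (delForest ts).map fun ts' => t :: ts'
end

/-- Tree factorial, extended to the empty tree by `∅! = 1`. -/
def factO : Option RTree → ℕ
  | none => 1
  | some t => t.fact

/-- The number of vertices of a forest. -/
def forestSize (ts : List RTree) : ℕ := (ts.map size).sum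

/-- The forest factorial, the product of the factorials of the trees. -/
def forestFact (ts : List RTree) : ℕ := (ts.map fact).prod

lemma size_node (ts : List RTree) : (node ts).size = 1 + forestSize ts := by
  rw [size, forestSize, List.attach_map_val]

lemma fact_node (ts : List RTree) :
    (node ts).fact = (1 + forestSize ts) * forestFact ts := by
  rw [fact, forestFact, List.attach_map_val, size_node]

lemma forestSize_cons (t : RTree) (ts : List RTree) :
    forestSize (t :: ts) = t.size + forestSize ts := by
  simp [forestSize]

lemma forestFact_cons (t : RTree) (ts : List RTree) :
    forestFact (t :: ts) = t.fact * forestFact ts := by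
  simp [forestFact]

lemma size_pos (t : RTree) : 0 < t.size := by
  cases t
  rw [size_node]
  omega

/-- The number of vertices, extended to the empty tree by `|∅| = 0`. -/
def sizeO : Option RTree → ℕ
  | none => 0
  | some t => t.size

mutual
theorem sizeO_of_mem_delOne : ∀ (t : RTree), ∀ o ∈ delOne t, sizeO o + 1 = t.size
  | .node [], o, ho => by
      simp only [delOne, List.mem_singleton] at ho
      subst ho
      simp [sizeO, size_node, forestSize]
  | .node (t :: ts), o, ho => by
      simp only [delOne, List.mem_map] at ho
      obtain ⟨ts', h, rfl⟩ := ho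
      have := forestSize_of_mem_delForest (t :: ts) ts' h
      simp only [sizeO, size_node]
      omega

theorem forestSize_of_mem_delForest :
    ∀ (ts : List RTree), ∀ ts' ∈ delForest ts, forestSize ts' + 1 = forestSize ts
  | [], ts', h => by simp [delForest] at h
  | t :: ts, ts', h => by
      simp only [delForest, List.mem_append, List.mem_map] at h
      rcases h with ⟨o, ho, rfl⟩ | ⟨us, hus, rfl⟩
      · have := sizeO_of_mem_delOne t o ho
        cases o with
        | none =>
          simp only [sizeO] at this
          simp only [forestSize_cons]
          omega
        | some t' =>
          simp only [sizeO] at this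
          simp only [forestSize_cons]
          omega
      · have := forestSize_of_mem_delForest ts us hus
        simp only [forestSize_cons]
        omega
end

mutual
theorem size_div_fact_aux : ∀ t : RTree,
    (t.size : ℚ) / (t.fact : ℚ) = ((delOne t).map fun o => 1 / (factO o : ℚ)).sum
  | .node [] => by
      simp [delOne, factO, size_node, fact_node, forestSize, forestFact]
  | .node (t :: ts) => by
      have ih := forestSize_div_forestFact (t :: ts)
      have hpos : 0 < forestSize (t :: ts) := by
        have := size_pos t
        rw [forestSize_cons]
        omega
      have key : (delForest (t :: ts)).map
            ((fun o => 1 / (factO o : ℚ)) ∘ fun ts' => some (node ts')) =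
          (delForest (t :: ts)).map
            fun ts' => 1 / (forestSize (t :: ts) : ℚ) * (1 / (forestFact ts' : ℚ)) := by
        refine List.map_congr_left fun ts' h => ?_
        have := forestSize_of_mem_delForest (t :: ts) ts' h
        simp only [Function.comp, factO, fact_node]
        rw [← this]
        push_cast
        rw [one_div_mul_one_div, add_comm (1 : ℚ)]
      rw [delOne, List.map_map, key, List.sum_map_mul_left, ← ih, fact_node, size_node]
      have h0 : (forestSize (t :: ts) : ℚ) ≠ 0 := by exact_mod_cast hpos.ne'
      have h1 : (1 + forestSize (t :: ts) : ℚ) ≠ 0 := by positivity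
      push_cast
      rw [div_mul_cancel_left₀ h1, one_div, div_eq_mul_inv, inv_mul_cancel_left₀ h0]

theorem forestSize_div_forestFact : ∀ ts : List RTree,
    (forestSize ts : ℚ) / (forestFact ts : ℚ) =
      ((delForest ts).map fun ts' => 1 / (forestFact ts' : ℚ)).sum
  | [] => by simp [delForest, forestSize]
  | t :: ts => by
      have iht := size_div_fact_aux t
      have ihts := forestSize_div_forestFact ts
      have hl : ((delOne t).map ((fun ts' => 1 / (forestFact ts' : ℚ)) ∘ fun o =>
            match o with
            | none => ts
            | some t' => t' :: ts)) =
          (delOne t).map fun o => 1 / (factO o : ℚ) * (1 / (forestFact ts : ℚ)) := by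
        refine List.map_congr_left fun o _ => ?_
        cases o with
        | none => simp [factO]
        | some t' => simp [factO, forestFact_cons, mul_comm]
      have hr : (delForest ts).map
            ((fun ts' => 1 / (forestFact ts' : ℚ)) ∘ fun ts' => t :: ts') =
          (delForest ts).map fun ts' => 1 / (t.fact : ℚ) * (1 / (forestFact ts' : ℚ)) := by
        refine List.map_congr_left fun ts' _ => ?_
        simp [forestFact_cons, mul_comm]
      -- The Leibniz rule: the two summands delete a leaf of `t` and a leaf of `ts`.
      rw [delForest, List.map_append, List.sum_append, List.map_map, List.map_map, hl, hr,
        List.sum_map_mul_right, List.sum_map_mul_left, ← iht, ← ihts, forestSize_cons,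
        forestFact_cons]
      push_cast
      ring
end

/-- `|t|/t! = ∑_{t' ∈ L₋(t)} 1/t'!`. -/
theorem size_div_fact_eq_sum_delOne (t : RTree) :
    (t.size : ℚ) / (t.fact : ℚ) =
      ((delOne t).map fun o => 1 / (factO o : ℚ)).sum := by
  exact size_div_fact_aux t

end RTree
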